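/- arXiv:1708.09512 — 2 statements merged into one kernel-verified Lean document; each statement's English description precedes it below -/
import Mathlib

section
/- In the Black–Scholes Asian setting, let f(x) = e^{−μT}·1{S_A(x) ≥ K} be the discounted payoff of the binary Asian option, and let ρ be the standard normal density. Fix j ∈ {1,…,d} such that either a_{ij} ≥ 0 for all i ∈ {1,…,d} or a_{ij} ≤ 0 for all i ∈ {1,…,d}. Then for every subset v ⊆ {1,…,d} with j ∈ v, the conditional expectation P_v f is C^∞ on ℝ^{d−|v|}. -/
/-!
Write `basket x = ∑ i, c i * exp (∑ k, B i k * x k)` for the average price, with `c i > 0` and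
`B = σ A`. The sign condition on column `j`, together with the nonsingularity of `A`, makes the
partial derivative `slope = ∂_j basket` nowhere zero, even if some entries of the column vanish.

For a smooth cutoff `θ`, a weight `w` and a direction `e` in the free variables,
`θ'(basket) * ∂_e basket = ∂_j (θ ∘ basket) * (∂_e basket / slope)`. Integrating by parts in the
Gaussian variable `x_j` therefore turns `∂_e ∫ θ(basket) w dγ` into `∫ θ(basket) w_e dγ`, where
`w_e = ∂_e w - ∂_j (q w) + x_j q w` and `q = ∂_e basket / slope`: no derivative falls on `θ`
(`integral_deriv_comp_basket`, `hasDerivAt_expect`). The weights produced in this way stay in the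
algebra generated by constants, coordinates, exponentials of linear forms and `slope⁻¹`
(`Weight`). This algebra is closed under differentiation, and its members grow at most
exponentially, so they are Gaussian integrable.

In integrated form along segments, the identity survives the limit from smooth cutoffs to the
indicator of `[K, ∞)` (`expect_ind_sub`). Its right-hand side is locally bounded, so
`y ↦ ∫ 1{basket ≥ K} w dγ` is locally Lipschitz for every weight `w`, hence continuous. It is then
`C¹` with partial derivatives of the same form, and `C^∞` follows by induction
(`contDiff_expect_ind`). No implicit function is used, so the configurations where
`basket ≥ K` for all values of `x_j` need no separate treatment.
-/

open MeasureTheory Set Filter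

/-- The standard normal density. -/
noncomputable def stdNormalPdf : ℝ → ℝ :=
  fun x => (Real.sqrt (2 * Real.pi))⁻¹ * Real.exp (-x ^ 2 / 2)

/-- The simulated asset price `S_i(x) = S_0·exp[(μ − σ²/2)·t_i + σ·Σ_k a_{ik} x_k]`
at time `t_i = i·Δt` (with `i = 1,…,d`). -/
noncomputable def Sprice (d : ℕ) (S0 σ μ Δt : ℝ) (A : Matrix (Fin d) (Fin d) ℝ)
    (i : Fin d) (x : Fin d → ℝ) : ℝ :=
  S0 * Real.exp ((μ - σ ^ 2 / 2) * ((i : ℕ) + 1) * Δt + σ * ∑ k, A i k * x k)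

/-- Fill in the coordinates in `v` with `z` and the coordinates outside `v` with `y`. -/
def insv {d : ℕ} (v : Finset (Fin d)) (z : {i : Fin d // i ∈ v} → ℝ)
    (y : {i : Fin d // i ∉ v} → ℝ) : Fin d → ℝ :=
  fun i => if h : i ∈ v then z ⟨i, h⟩ else y ⟨i, h⟩

/-- `(P_v f)(x_{-v}) = ∫_{ℝ^{|v|}} f(x_v, x_{-v}) ∏_{i∈v} ρ(x_i) dx_v`. -/
noncomputable def Pv {d : ℕ} (v : Finset (Fin d)) (ρ : ℝ → ℝ) (f : (Fin d → ℝ) → ℝ) :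
    ({i : Fin d // i ∉ v} → ℝ) → ℝ :=
  fun y => ∫ z : {i : Fin d // i ∈ v} → ℝ,
    f (insv v z y) * ∏ i : {i : Fin d // i ∈ v}, ρ (z i)

open scoped Topology

namespace BinaryAsian

variable {d : ℕ}

/-- The average price, as a positive combination of exponentials of linear forms. -/
noncomputable def basket (c : Fin d → ℝ) (B : Fin d → Fin d → ℝ) (x : Fin d → ℝ) : ℝ :=
  ∑ i, c i * Real.exp (∑ k, B i k * x k)

/-- The partial derivative of `basket` in the `j`-th variable. -/
noncomputable def slope (c : Fin d → ℝ) (B : Fin d → Fin d → ℝ) (j : Fin d) (x : Fin d → ℝ) : ℝ :=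
  ∑ i, c i * B i j * Real.exp (∑ k, B i k * x k)

/-- The weights produced by repeated differentiation and integration by parts: the algebra of
functions generated by constants, coordinates, exponentials of linear forms and `slope⁻¹`. -/
inductive Weight (c : Fin d → ℝ) (B : Fin d → Fin d → ℝ) (j : Fin d) :
    ((Fin d → ℝ) → ℝ) → Prop
  | const (a : ℝ) : Weight c B j (fun _ => a)
  | coord (k : Fin d) : Weight c B j (fun x => x k)
  | expo (b : Fin d → ℝ) : Weight c B j (fun x => Real.exp (∑ k, b k * x k))
  | inv : Weight c B j (fun x => (slope c B j x)⁻¹)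
  | add {w₁ w₂ : (Fin d → ℝ) → ℝ} : Weight c B j w₁ → Weight c B j w₂ →
      Weight c B j (fun x => w₁ x + w₂ x)
  | mul {w₁ w₂ : (Fin d → ℝ) → ℝ} : Weight c B j w₁ → Weight c B j w₂ →
      Weight c B j (fun x => w₁ x * w₂ x)

/-- The conditions on the coefficients under which `slope c B j` has no zero: positive `c`, and a
`j`-th column of `B` that is nonzero and of constant sign. -/
structure Admissible (c : Fin d → ℝ) (B : Fin d → Fin d → ℝ) (j : Fin d) : Prop where
  pos : ∀ i, 0 < c i
  sign : (∀ i, 0 ≤ B i j) ∨ (∀ i, B i j ≤ 0)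
  ne : ∃ i, B i j ≠ 0

/-! ### The algebra of weights -/

variable {c : Fin d → ℝ} {B : Fin d → Fin d → ℝ} {j : Fin d} {w : (Fin d → ℝ) → ℝ}

lemma Weight.sum {ι : Type*} (s : Finset ι) {f : ι → (Fin d → ℝ) → ℝ}
    (h : ∀ i, Weight c B j (f i)) : Weight c B j (fun x => ∑ i ∈ s, f i x) := by
  classical
  induction s using Finset.induction_on with
  | empty => simpa using Weight.const 0
  | insert a s ha ih => simpa [Finset.sum_insert ha] using (h a).add ih

lemma weight_basket : Weight c B j (basket c B) :=
  Weight.sum _ fun i => (Weight.const (c i)).mul (Weight.expo (B i))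

lemma weight_slope : Weight c B j (slope c B j) :=
  Weight.sum _ fun i => (Weight.const (c i * B i j)).mul (Weight.expo (B i))

/-- All terms of `slope` have the same sign, so any one of them bounds `|slope|` from below. -/
lemma Admissible.exists_le_abs_slope (h : Admissible c B j) :
    ∃ i, ∃ a > 0, ∀ x, a * Real.exp (∑ k, B i k * x k) ≤ |slope c B j x| := by
  obtain ⟨i, hi⟩ := h.ne
  refine ⟨i, c i * |B i j|, mul_pos (h.pos i) (abs_pos.2 hi), fun x => ?_⟩
  have key : |slope c B j x| = ∑ i, c i * |B i j| * Real.exp (∑ k, B i k * x k) := by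
    unfold slope
    rcases h.sign with hs | hs
    · rw [abs_of_nonneg (Finset.sum_nonneg fun i _ =>
        mul_nonneg (mul_nonneg (h.pos i).le (hs i)) (Real.exp_pos _).le)]
      simp only [abs_of_nonneg (hs _)]
    · rw [abs_of_nonpos (Finset.sum_nonpos fun i _ =>
        mul_nonpos_of_nonpos_of_nonneg
          (mul_nonpos_of_nonneg_of_nonpos (h.pos i).le (hs i)) (Real.exp_pos _).le)]
      simp only [abs_of_nonpos (hs _), ← Finset.sum_neg_distrib, mul_neg, neg_mul]
  rw [key]
  exact Finset.single_le_sum (f := fun i => c i * |B i j| * Real.exp (∑ k, B i k * x k))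
    (fun i _ => mul_nonneg (mul_nonneg (h.pos i).le (abs_nonneg _)) (Real.exp_pos _).le)
    (Finset.mem_univ i)

lemma Admissible.slope_ne (h : Admissible c B j) (x : Fin d → ℝ) : slope c B j x ≠ 0 := by
  obtain ⟨i, a, ha, hx⟩ := h.exists_le_abs_slope
  exact abs_pos.1 ((mul_pos ha (Real.exp_pos _)).trans_le (hx x))

lemma contDiff_slope : ContDiff ℝ 1 (slope c B j) := by
  unfold slope; fun_prop

lemma Weight.contDiff (h : Admissible c B j) (hw : Weight c B j w) : ContDiff ℝ 1 w := by
  induction hw with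
  | const a => fun_prop
  | coord k => fun_prop
  | expo b => fun_prop
  | inv => exact contDiff_slope.inv h.slope_ne
  | add _ _ h₁ h₂ => exact h₁.add h₂
  | mul _ _ h₁ h₂ => exact h₁.mul h₂

lemma Weight.differentiableAt (h : Admissible c B j) (hw : Weight c B j w) (x : Fin d → ℝ) :
    DifferentiableAt ℝ w x :=
  (hw.contDiff h).differentiable one_ne_zero x

lemma Weight.continuous (h : Admissible c B j) (hw : Weight c B j w) : Continuous w :=
  (hw.contDiff h).continuous

lemma fderiv_expo (b x e : Fin d → ℝ) :
    fderiv ℝ (fun x : Fin d → ℝ => Real.exp (∑ k, b k * x k)) x e =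
      (∑ k, b k * e k) * Real.exp (∑ k, b k * x k) := by
  have h : HasFDerivAt (fun x : Fin d → ℝ => ∑ k, b k * x k)
      (∑ k, b k • (ContinuousLinearMap.proj k : (Fin d → ℝ) →L[ℝ] ℝ)) x :=
    HasFDerivAt.fun_sum fun k _ => (hasFDerivAt_apply k x).const_mul (b k)
  rw [h.exp.fderiv]
  simp [mul_comm]

lemma fderiv_basket (x e : Fin d → ℝ) :
    fderiv ℝ (basket c B) x e = ∑ i, c i * ((∑ k, B i k * e k) * Real.exp (∑ k, B i k * x k)) := by
  unfold basket
  rw [fderiv_fun_sum (fun i _ => by fun_prop), sum_apply]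
  refine Finset.sum_congr rfl fun i _ => ?_
  rw [fderiv_const_mul (by fun_prop)]
  simp [fderiv_expo]

lemma fderiv_basket_single (x : Fin d → ℝ) :
    fderiv ℝ (basket c B) x (Pi.single j 1) = slope c B j x := by
  rw [fderiv_basket]
  simp [slope, Pi.single_apply, mul_assoc]

lemma Weight.fderiv_apply (h : Admissible c B j) (hw : Weight c B j w) (e : Fin d → ℝ) :
    Weight c B j (fun x => fderiv ℝ w x e) := by
  induction hw with
  | const a => simpa using Weight.const 0
  | coord k =>
    have : (fun x : Fin d → ℝ => fderiv ℝ (fun x : Fin d → ℝ => x k) x e) =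
        fun _ => e k := by
      funext x
      rw [(hasFDerivAt_apply k x).fderiv]; rfl
    rw [this]; exact Weight.const _
  | expo b =>
    simp only [fderiv_expo]
    exact (Weight.const _).mul (Weight.expo b)
  | inv =>
    have hs : ∀ x, fderiv ℝ (slope c B j) x e =
        ∑ i, c i * B i j * ((∑ k, B i k * e k) * Real.exp (∑ k, B i k * x k)) := by
      intro x
      unfold slope
      rw [fderiv_fun_sum (fun i _ => by fun_prop), sum_apply]
      refine Finset.sum_congr rfl fun i _ => ?_
      rw [fderiv_const_mul (by fun_prop)]
      simp [fderiv_expo]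
    have : (fun x : Fin d → ℝ => fderiv ℝ (fun x => (slope c B j x)⁻¹) x e) =
        fun x => (-1) * ((slope c B j x)⁻¹ * (slope c B j x)⁻¹) *
          ∑ i, c i * B i j * ((∑ k, B i k * e k) * Real.exp (∑ k, B i k * x k)) := by
      funext x
      have hd := (contDiff_slope (c := c) (B := B) (j := j)).differentiable one_ne_zero x
      have := (hasDerivAt_inv (h.slope_ne x)).comp_hasFDerivAt x hd.hasFDerivAt
      rw [show (fun x => (slope c B j x)⁻¹) = Inv.inv ∘ slope c B j from rfl, this.fderiv]
      simp only [smul_apply, smul_eq_mul, hs]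
      ring
    rw [this]
    exact ((Weight.const _).mul (Weight.inv.mul Weight.inv)).mul
      (Weight.sum _ fun i => (Weight.const _).mul ((Weight.const _).mul (Weight.expo _)))
  | add h₁ h₂ i₁ i₂ =>
    have := i₁.add i₂
    convert this using 2 with x
    rw [fderiv_fun_add (h₁.differentiableAt h x) (h₂.differentiableAt h x)]; rfl
  | mul h₁ h₂ i₁ i₂ =>
    have := (h₁.mul i₂).add (h₂.mul i₁)
    convert this using 2 with x
    rw [fderiv_fun_mul (h₁.differentiableAt h x) (h₂.differentiableAt h x)]; rfl

/-- At most exponential growth. A single constant serves as prefactor and as rate; by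
`ExpBound.of_le` this loses no generality. -/
def ExpBound {V : Type*} [Norm V] (g : V → ℝ) : Prop :=
  ∃ C, 0 ≤ C ∧ ∀ x, |g x| ≤ C * Real.exp (C * ‖x‖)

lemma ExpBound.of_le {V : Type*} [NormedAddCommGroup V] {g : V → ℝ} {a b : ℝ}
    (h : ∀ x, |g x| ≤ a * Real.exp (b * ‖x‖)) : ExpBound g := by
  refine ⟨max |a| |b|, le_max_of_le_left (abs_nonneg _), fun x => (h x).trans ?_⟩
  gcongr
  · exact (le_abs_self _).trans (le_max_left _ _)
  · exact (le_abs_self _).trans (le_max_right _ _)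

lemma ExpBound.mul {V : Type*} [NormedAddCommGroup V] {f g : V → ℝ} (hf : ExpBound f)
    (hg : ExpBound g) : ExpBound (fun x => f x * g x) := by
  obtain ⟨a, ha, hf⟩ := hf
  obtain ⟨b, hb, hg⟩ := hg
  refine ExpBound.of_le (a := a * b) (b := a + b) fun x => ?_
  rw [abs_mul, add_mul, Real.exp_add]
  calc _ ≤ (a * Real.exp (a * ‖x‖)) * (b * Real.exp (b * ‖x‖)) := by
        gcongr
        · exact hf x
        · exact hg x
    _ = _ := by ring

lemma ExpBound.add {V : Type*} [NormedAddCommGroup V] {f g : V → ℝ} (hf : ExpBound f)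
    (hg : ExpBound g) : ExpBound (fun x => f x + g x) := by
  obtain ⟨a, ha, hf⟩ := hf
  obtain ⟨b, hb, hg⟩ := hg
  refine ExpBound.of_le (a := a + b) (b := a + b) fun x => ?_
  calc _ ≤ |f x| + |g x| := abs_add_le _ _
    _ ≤ a * Real.exp ((a + b) * ‖x‖) + b * Real.exp ((a + b) * ‖x‖) := by
        gcongr
        · refine (hf x).trans ?_
          gcongr
          linarith
        · refine (hg x).trans ?_
          gcongr
          linarith
    _ = _ := by ring

lemma abs_linear_le (b x : Fin d → ℝ) : |∑ k, b k * x k| ≤ (∑ k, |b k|) * ‖x‖ := by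
  rw [Finset.sum_mul]
  refine (Finset.abs_sum_le_sum_abs _ _).trans (Finset.sum_le_sum fun k _ => ?_)
  rw [abs_mul]
  gcongr
  exact norm_le_pi_norm x k

lemma Weight.expBound (h : Admissible c B j) (hw : Weight c B j w) : ExpBound w := by
  induction hw with
  | const a => exact ExpBound.of_le (a := |a|) (b := 0) fun x => by simp
  | coord k =>
    refine ExpBound.of_le (a := 1) (b := 1) fun x => ?_
    have h₁ : |x k| ≤ ‖x‖ := norm_le_pi_norm x k
    have h₂ := Real.add_one_le_exp ‖x‖
    simp only [one_mul]
    linarith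
  | expo b =>
    refine ExpBound.of_le (a := 1) (b := ∑ k, |b k|) fun x => ?_
    rw [Real.abs_exp, one_mul]
    exact Real.exp_le_exp.2 ((le_abs_self _).trans (abs_linear_le b x))
  | inv =>
    obtain ⟨i, a, ha, hx⟩ := h.exists_le_abs_slope
    refine ExpBound.of_le (a := a⁻¹) (b := ∑ k, |B i k|) fun x => ?_
    rw [abs_inv]
    calc _ ≤ (a * Real.exp (∑ k, B i k * x k))⁻¹ :=
          inv_anti₀ (mul_pos ha (Real.exp_pos _)) (hx x)
      _ = a⁻¹ * Real.exp (-∑ k, B i k * x k) := by rw [mul_inv, Real.exp_neg]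
      _ ≤ _ := by
          gcongr
          exact (neg_le_abs _).trans (abs_linear_le _ x)
  | add _ _ h₁ h₂ => exact h₁.add h₂
  | mul _ _ h₁ h₂ => exact h₁.mul h₂

/-- The weight `∂_e w - ∂_j (q w) + x_j q w`, with `q = ∂_e basket / ∂_j basket`, that replaces `w`
when an integral against the Gaussian density is differentiated in direction `e`. The term
`x_j q w` comes from the `x_j`-derivative of the density. -/
noncomputable def ibpWeight (c : Fin d → ℝ) (B : Fin d → Fin d → ℝ) (j : Fin d)
    (w : (Fin d → ℝ) → ℝ) (e x : Fin d → ℝ) : ℝ :=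
  fderiv ℝ w x e
    - fderiv ℝ (fun x => fderiv ℝ (basket c B) x e * (slope c B j x)⁻¹ * w x) x (Pi.single j 1)
    + x j * (fderiv ℝ (basket c B) x e * (slope c B j x)⁻¹ * w x)

lemma Weight.transport (h : Admissible c B j) (hw : Weight c B j w) (e : Fin d → ℝ) :
    Weight c B j (fun x => fderiv ℝ (basket c B) x e * (slope c B j x)⁻¹ * w x) :=
  ((weight_basket.fderiv_apply h e).mul Weight.inv).mul hw

lemma Weight.ibp (h : Admissible c B j) (hw : Weight c B j w) (e : Fin d → ℝ) :
    Weight c B j (ibpWeight c B j w e) := by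
  have := ((hw.fderiv_apply h e).add ((Weight.const (-1)).mul
    ((hw.transport h e).fderiv_apply h (Pi.single j 1)))).add ((Weight.coord j).mul (hw.transport h e))
  convert this using 2 with x
  simp only [ibpWeight]
  ring

lemma clm_eq_sum (L : (Fin d → ℝ) →L[ℝ] ℝ) (e : Fin d → ℝ) :
    L e = ∑ k, e k * L (Pi.single k 1) := by
  conv_lhs => rw [pi_eq_sum_univ' e]
  simp [map_sum]

/-- `ibpWeight` is linear in the direction. -/
lemma ibpWeight_eq_sum (h : Admissible c B j) (hw : Weight c B j w) (e x : Fin d → ℝ) :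
    ibpWeight c B j w e x =
      ∑ k, e k * ibpWeight c B j w (Pi.single k 1) x := by
  have hq : ∀ x, fderiv ℝ (basket c B) x e * (slope c B j x)⁻¹ * w x =
      ∑ k, e k * (fderiv ℝ (basket c B) x (Pi.single k 1) * (slope c B j x)⁻¹ * w x) := by
    intro x
    rw [clm_eq_sum (fderiv ℝ (basket c B) x) e, Finset.sum_mul, Finset.sum_mul]
    exact Finset.sum_congr rfl fun k _ => by ring
  simp only [ibpWeight]
  rw [hq x, funext hq, fderiv_fun_sum (fun k _ =>
      ((hw.transport h (Pi.single k 1)).differentiableAt h x).const_mul _),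
    clm_eq_sum (fderiv ℝ w x) e, sum_apply, Finset.mul_sum,
    ← Finset.sum_sub_distrib, ← Finset.sum_add_distrib]
  refine Finset.sum_congr rfl fun k _ => ?_
  rw [fderiv_const_mul ((hw.transport h (Pi.single k 1)).differentiableAt h x)]
  simp only [smul_apply, smul_eq_mul]
  ring

/-! ### Gaussian integrals -/

variable {v : Finset (Fin d)}

/-- The standard Gaussian density in the variables indexed by `v`. -/
noncomputable def gauss (v : Finset (Fin d)) (z : {i : Fin d // i ∈ v} → ℝ) : ℝ :=
  ∏ i, stdNormalPdf (z i)

lemma gauss_eq (z : {i : Fin d // i ∈ v} → ℝ) :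
    gauss v z = (∏ _i : {i : Fin d // i ∈ v}, (Real.sqrt (2 * Real.pi))⁻¹) *
      Real.exp (∑ i, -(z i) ^ 2 / 2) := by
  simp only [gauss, stdNormalPdf, Finset.prod_mul_distrib, Real.exp_sum]

lemma gauss_nonneg (z : {i : Fin d // i ∈ v} → ℝ) : 0 ≤ gauss v z :=
  Finset.prod_nonneg fun _ _ => by unfold stdNormalPdf; positivity

lemma continuous_gauss : Continuous (gauss v) := by
  unfold gauss stdNormalPdf; fun_prop

lemma hasLineDerivAt_gauss (k : {i : Fin d // i ∈ v}) (z : {i : Fin d // i ∈ v} → ℝ) :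
    HasLineDerivAt ℝ (gauss v) (-z k * gauss v z) z (Pi.single k 1) := by
  have h₁ : ∀ i, HasDerivAt (fun t : ℝ => -((z + t • (Pi.single k 1 : _ → ℝ)) i) ^ 2 / 2)
      (-z i * (Pi.single k 1 : {i : Fin d // i ∈ v} → ℝ) i) 0 := by
    intro i
    have h₀ : HasDerivAt (fun t : ℝ => z i + t * (Pi.single k 1 : {i : Fin d // i ∈ v} → ℝ) i)
        ((Pi.single k 1 : {i : Fin d // i ∈ v} → ℝ) i) 0 := by
      simpa using ((hasDerivAt_id (0 : ℝ)).mul_const _).const_add (z i)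
    refine ((h₀.fun_pow 2).fun_neg.div_const 2).congr_deriv ?_
    simp only [zero_mul, add_zero, Nat.cast_ofNat, Nat.add_one_sub_one, pow_one]
    ring
  have h₂ := (HasDerivAt.fun_sum (u := Finset.univ) fun i _ => h₁ i).exp.const_mul
    (∏ _i : {i : Fin d // i ∈ v}, (Real.sqrt (2 * Real.pi))⁻¹)
  unfold HasLineDerivAt
  simp only [gauss_eq]
  refine h₂.congr_deriv ?_
  simp [Pi.single_apply]
  ring

lemma integrable_exp_mul_stdNormalPdf (C : ℝ) :
    Integrable (fun t : ℝ => Real.exp (C * |t|) * stdNormalPdf t) := by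
  have h := (integrable_exp_neg_mul_sq (b := 1 / 4) (by norm_num)).const_mul
    (Real.exp (C ^ 2) * (Real.sqrt (2 * Real.pi))⁻¹)
  refine h.mono' (by unfold stdNormalPdf; fun_prop) (Eventually.of_forall fun t => ?_)
  unfold stdNormalPdf
  rw [Real.norm_of_nonneg (by positivity)]
  calc _ = (Real.sqrt (2 * Real.pi))⁻¹ * (Real.exp (C * |t|) * Real.exp (-t ^ 2 / 2)) := by ring
    _ ≤ (Real.sqrt (2 * Real.pi))⁻¹ * (Real.exp (C ^ 2) * Real.exp (-(1 / 4) * t ^ 2)) := by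
        rw [← Real.exp_add, ← Real.exp_add]
        refine mul_le_mul_of_nonneg_left (Real.exp_le_exp.2 ?_) (by positivity)
        nlinarith [sq_nonneg (C - |t| / 2), sq_abs t]
    _ = _ := by ring

lemma integrable_exp_mul_gauss {C : ℝ} (hC : 0 ≤ C) :
    Integrable (fun z => Real.exp (C * ‖z‖) * gauss v z) := by
  have h : Integrable (fun z : {i : Fin d // i ∈ v} → ℝ =>
      ∏ i, (Real.exp (C * |z i|) * stdNormalPdf (z i))) :=
    Integrable.fintype_prod (f := fun _ t => Real.exp (C * |t|) * stdNormalPdf t)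
      fun _ => integrable_exp_mul_stdNormalPdf C
  refine h.mono' (by have := continuous_gauss (v := v); fun_prop)
    (Eventually.of_forall fun z => ?_)
  rw [Real.norm_of_nonneg (mul_nonneg (Real.exp_pos _).le (gauss_nonneg z)),
    Finset.prod_mul_distrib, ← Real.exp_sum, ← Finset.mul_sum]
  unfold gauss
  refine mul_le_mul_of_nonneg_right ?_ (gauss_nonneg z)
  gcongr
  refine (pi_norm_le_iff_of_nonneg (Finset.sum_nonneg fun _ _ => abs_nonneg _)).2 fun i => ?_
  exact Finset.single_le_sum (f := fun i => |z i|) (fun _ _ => abs_nonneg _) (Finset.mem_univ i)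

lemma insv_add_smul_right (z : {i : Fin d // i ∈ v} → ℝ) (y h : {i : Fin d // i ∉ v} → ℝ)
    (r : ℝ) : insv v z (y + r • h) = insv v z y + r • insv v 0 h := by
  funext i
  by_cases hi : i ∈ v <;> simp [insv, hi]

lemma insv_add_smul_left (hj : j ∈ v) (z : {i : Fin d // i ∈ v} → ℝ)
    (y : {i : Fin d // i ∉ v} → ℝ) (t : ℝ) :
    insv v (z + t • Pi.single ⟨j, hj⟩ 1) y = insv v z y + t • Pi.single j 1 := by
  funext i
  by_cases hi : i ∈ v
  · simp [insv, hi, Pi.single_apply]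
  · have : i ≠ j := fun h => hi (h ▸ hj)
    simp [insv, hi, this]

lemma continuous_insv_left (y : {i : Fin d // i ∉ v} → ℝ) :
    Continuous (fun z => insv v z y) := by
  refine continuous_pi fun i => ?_
  by_cases hi : i ∈ v
  · simpa [insv, hi] using continuous_apply _
  · simpa [insv, hi] using continuous_const

lemma norm_insv_le (z : {i : Fin d // i ∈ v} → ℝ) (y : {i : Fin d // i ∉ v} → ℝ) :
    ‖insv v z y‖ ≤ ‖z‖ + ‖y‖ := by
  refine (pi_norm_le_iff_of_nonneg (by positivity)).2 fun i => ?_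
  by_cases hi : i ∈ v
  · simpa [insv, hi] using (norm_le_pi_norm z ⟨i, hi⟩).trans (le_add_of_nonneg_right (norm_nonneg y))
  · simpa [insv, hi] using (norm_le_pi_norm y ⟨i, hi⟩).trans (le_add_of_nonneg_left (norm_nonneg z))

/-- A function of exponential growth, times the Gaussian density, has an integrable majorant that
is uniform over bounded sets of the free variables. -/
lemma ExpBound.exists_dominating (hw : ExpBound w) (R : ℝ) :
    ∃ b : ({i : Fin d // i ∈ v} → ℝ) → ℝ, Integrable b ∧
      ∀ z y, ‖y‖ ≤ R → |w (insv v z y)| * gauss v z ≤ b z := by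
  obtain ⟨C, hC, hw⟩ := hw
  refine ⟨_, (integrable_exp_mul_gauss hC).const_mul (C * Real.exp (C * R)), fun z y hy => ?_⟩
  rw [← mul_assoc, mul_assoc C, ← Real.exp_add]
  refine mul_le_mul_of_nonneg_right ((hw _).trans ?_) (gauss_nonneg z)
  have := norm_insv_le z y
  gcongr
  nlinarith

/-- `y ↦ ∫ θ(basket(z, y)) w(z, y) dγ(z)`, the Gaussian expectation over the variables in `v` of
the weight `w` cut off by `θ`. -/
noncomputable def expect (c : Fin d → ℝ) (B : Fin d → Fin d → ℝ) (v : Finset (Fin d))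
    (θ : ℝ → ℝ) (w : (Fin d → ℝ) → ℝ) (y : {i : Fin d // i ∉ v} → ℝ) : ℝ :=
  ∫ z, θ (basket c B (insv v z y)) * w (insv v z y) * gauss v z

lemma continuous_basket : Continuous (basket c B) := by
  unfold basket; fun_prop

lemma aesm_integrand {θ : ℝ → ℝ} (hθ : Measurable θ) (hw : Continuous w)
    (y : {i : Fin d // i ∉ v} → ℝ) :
    AEStronglyMeasurable
      (fun z => θ (basket c B (insv v z y)) * w (insv v z y) * gauss v z) volume := by
  have hi := continuous_insv_left y
  exact ((hθ.comp (continuous_basket.comp hi).measurable).mul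
    (hw.comp hi).measurable |>.mul continuous_gauss.measurable).aestronglyMeasurable

lemma norm_integrand_le {θ : ℝ → ℝ} {M : ℝ} (hM : ∀ t, |θ t| ≤ M)
    (z : {i : Fin d // i ∈ v} → ℝ) (y : {i : Fin d // i ∉ v} → ℝ) :
    ‖θ (basket c B (insv v z y)) * w (insv v z y) * gauss v z‖ ≤
      M * (|w (insv v z y)| * gauss v z) := by
  rw [Real.norm_eq_abs, abs_mul, abs_mul, abs_of_nonneg (gauss_nonneg z), mul_assoc]
  exact mul_le_mul_of_nonneg_right (hM _) (mul_nonneg (abs_nonneg _) (gauss_nonneg z))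

lemma integrable_integrand (hc : Continuous w) (hw : ExpBound w) {θ : ℝ → ℝ}
    (hθ : Measurable θ) {M : ℝ} (hM : ∀ t, |θ t| ≤ M) (y : {i : Fin d // i ∉ v} → ℝ) :
    Integrable (fun z => θ (basket c B (insv v z y)) * w (insv v z y) * gauss v z) := by
  obtain ⟨b, hb, hle⟩ := hw.exists_dominating (v := v) ‖y‖
  have hM0 : 0 ≤ M := (abs_nonneg _).trans (hM 0)
  refine (hb.const_mul M).mono' (aesm_integrand hθ hc y) (Eventually.of_forall fun z => ?_)
  exact (norm_integrand_le hM z y).trans (mul_le_mul_of_nonneg_left (hle z y le_rfl) hM0)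

/-- The bound is uniform over all cutoffs with values in `[-1, 1]`. -/
lemma exists_expect_bound (hw : ExpBound w) (R : ℝ) :
    ∃ M, ∀ θ : ℝ → ℝ, (∀ t, |θ t| ≤ 1) → ∀ y : {i : Fin d // i ∉ v} → ℝ, ‖y‖ ≤ R →
      |expect c B v θ w y| ≤ M := by
  obtain ⟨b, hb, hle⟩ := hw.exists_dominating (v := v) R
  refine ⟨∫ z, b z, fun θ hθ y hy => ?_⟩
  rw [← Real.norm_eq_abs]
  refine norm_integral_le_of_norm_le hb (Eventually.of_forall fun z => ?_)
  exact (norm_integrand_le hθ z y).trans ((one_mul _).trans_le (hle z y hy))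

lemma hasDerivAt_line {g : (Fin d → ℝ) → ℝ} {p e : Fin d → ℝ} {r : ℝ}
    (hg : DifferentiableAt ℝ g (p + r • e)) :
    HasDerivAt (fun t : ℝ => g (p + t • e)) (fderiv ℝ g (p + r • e) e) r := by
  have h : HasDerivAt (fun t : ℝ => p + t • e) e r := by
    simpa using ((hasDerivAt_id r).smul_const e).const_add p
  exact hg.hasFDerivAt.comp_hasDerivAt r h

/-! ### Differentiation of expectations with a smooth cutoff -/

/-- Integration by parts in `x_j`: the derivative of the integrand in direction `e`, which involves
`deriv θ`, has the same integral as `θ(basket)` against the weight `ibpWeight c B j w e`. -/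
lemma integral_deriv_comp_basket (h : Admissible c B j) (hw : Weight c B j w) (hj : j ∈ v)
    {θ : ℝ → ℝ} (hθ : ContDiff ℝ 1 θ) {M : ℝ} (hM : ∀ t, |θ t| ≤ M) (hM' : ∀ t, |deriv θ t| ≤ M)
    (e : Fin d → ℝ) (y : {i : Fin d // i ∉ v} → ℝ) :
    ∫ z, (deriv θ (basket c B (insv v z y)) *
        (fderiv ℝ (basket c B) (insv v z y) e * w (insv v z y)) * gauss v z +
      θ (basket c B (insv v z y)) * fderiv ℝ w (insv v z y) e * gauss v z) =
    expect c B v θ (ibpWeight c B j w e) y := by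
  have hθm := hθ.continuous.measurable
  have hθ'm := (hθ.continuous_deriv le_rfl).measurable
  have int : ∀ {u}, Weight c B j u → Integrable (fun z =>
      θ (basket c B (insv v z y)) * u (insv v z y) * gauss v z) := fun hu =>
    integrable_integrand (hu.continuous h) (hu.expBound h) hθm hM y
  have int' : ∀ {u}, Weight c B j u → Integrable (fun z =>
      deriv θ (basket c B (insv v z y)) * u (insv v z y) * gauss v z) := fun hu =>
    integrable_integrand (hu.continuous h) (hu.expBound h) hθ'm hM' y
  set q : (Fin d → ℝ) → ℝ :=
    fun x => fderiv ℝ (basket c B) x e * (slope c B j x)⁻¹ * w x with hq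
  have hqW : Weight c B j q := hw.transport h e
  have hqD : ∀ x, slope c B j x * q x = fderiv ℝ (basket c B) x e * w x := by
    intro x
    have := h.slope_ne x
    simp only [hq]
    field_simp
  have hline : ∀ {u : (Fin d → ℝ) → ℝ} (z), DifferentiableAt ℝ u (insv v z y) →
      HasLineDerivAt ℝ (fun z => u (insv v z y)) (fderiv ℝ u (insv v z y) (Pi.single j 1)) z
        (Pi.single (⟨j, hj⟩ : {i : Fin d // i ∈ v}) 1) := by
    intro u z hu
    unfold HasLineDerivAt
    simp only [insv_add_smul_left hj]
    have := hasDerivAt_line (g := u) (p := insv v z y) (e := Pi.single j 1) (r := 0) (by simpa)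
    simpa using this
  have ibp := integral_bilinear_hasLineDerivAt_right_eq_neg_left_of_integrable
    (μ := (volume : Measure ({i : Fin d // i ∈ v} → ℝ))) (B := ContinuousLinearMap.mul ℝ ℝ)
    (f := fun z => θ (basket c B (insv v z y)))
    (f' := fun z => deriv θ (basket c B (insv v z y)) * slope c B j (insv v z y))
    (g := fun z => q (insv v z y) * gauss v z)
    (g' := fun z => fderiv ℝ q (insv v z y) (Pi.single j 1) * gauss v z +
      q (insv v z y) * (-z ⟨j, hj⟩ * gauss v z))
    (v := Pi.single (⟨j, hj⟩ : {i : Fin d // i ∈ v}) 1)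
    (by
      refine (int' (weight_slope.mul hqW)).congr (Eventually.of_forall fun z => ?_)
      simp only [ContinuousLinearMap.mul_apply']
      ring)
    (by
      refine (int ((hqW.fderiv_apply h (Pi.single j 1)).add
        (((Weight.const (-1)).mul (Weight.coord j)).mul hqW))).congr
        (Eventually.of_forall fun z => ?_)
      simp only [ContinuousLinearMap.mul_apply', insv, hj, dif_pos]
      ring)
    (by
      refine (int hqW).congr (Eventually.of_forall fun z => ?_)
      simp only [ContinuousLinearMap.mul_apply']
      ring)
    (by
      intro z _
      have h₁ := hline z (weight_basket.differentiableAt h (insv v z y))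
      rw [fderiv_basket_single] at h₁
      have h₂ := ((hθ.differentiable one_ne_zero) (basket c B (insv v z y))).hasDerivAt
      unfold HasLineDerivAt at h₁ ⊢
      exact HasDerivAt.comp (h₂ := θ) 0 (by simpa using h₂) h₁)
    (by
      intro z _
      have h₁ := hline z (hqW.differentiableAt h (insv v z y))
      have h₂ := hasLineDerivAt_gauss ⟨j, hj⟩ z
      unfold HasLineDerivAt at h₁ h₂ ⊢
      simpa using h₁.fun_mul h₂)
  simp only [ContinuousLinearMap.mul_apply'] at ibp
  have e₁ : ∫ z, deriv θ (basket c B (insv v z y)) *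
        (fderiv ℝ (basket c B) (insv v z y) e * w (insv v z y)) * gauss v z =
      -∫ z, θ (basket c B (insv v z y)) * (fderiv ℝ q (insv v z y) (Pi.single j 1) * gauss v z +
        q (insv v z y) * (-z ⟨j, hj⟩ * gauss v z)) := by
    rw [ibp, neg_neg]
    congr 1
    funext z
    rw [← hqD]
    ring
  rw [integral_add (int' ((weight_basket.fderiv_apply h e).mul hw)) (int (hw.fderiv_apply h e)),
    e₁, ← integral_neg, ← integral_add]
  · unfold expect
    congr 1
    funext z
    have : insv v z y j = z ⟨j, hj⟩ := by simp [insv, hj]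
    simp only [ibpWeight, ← hq, this]
    ring
  · refine (int ((Weight.const (-1)).mul ((hqW.fderiv_apply h (Pi.single j 1)).add
      (((Weight.const (-1)).mul (Weight.coord j)).mul hqW)))).congr
      (Eventually.of_forall fun z => ?_)
    simp only [insv, hj, dif_pos]
    ring
  · exact int (hw.fderiv_apply h e)

lemma hasDerivAt_expect (h : Admissible c B j) (hw : Weight c B j w) (hj : j ∈ v)
    {θ : ℝ → ℝ} (hθ : ContDiff ℝ 1 θ) {M : ℝ} (hM : ∀ t, |θ t| ≤ M) (hM' : ∀ t, |deriv θ t| ≤ M)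
    (y η : {i : Fin d // i ∉ v} → ℝ) (r : ℝ) :
    HasDerivAt (fun r : ℝ => expect c B v θ w (y + r • η))
      (expect c B v θ (ibpWeight c B j w (insv v 0 η)) (y + r • η)) r := by
  have hθm := hθ.continuous.measurable
  have hθ'm := (hθ.continuous_deriv le_rfl).measurable
  have hM0 : 0 ≤ M := (abs_nonneg _).trans (hM 0)
  rw [← integral_deriv_comp_basket h hw hj hθ hM hM' (insv v 0 η) (y + r • η)]
  have hW₁ := (weight_basket.fderiv_apply h (insv v 0 η)).mul hw
  have hW₂ := hw.fderiv_apply h (insv v 0 η)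
  obtain ⟨b₁, hb₁, hle₁⟩ := (hW₁.expBound h).exists_dominating (v := v) (‖y‖ + (|r| + 1) * ‖η‖)
  obtain ⟨b₂, hb₂, hle₂⟩ := (hW₂.expBound h).exists_dominating (v := v) (‖y‖ + (|r| + 1) * ‖η‖)
  have hball : ∀ t ∈ Metric.ball r 1, ‖y + t • η‖ ≤ ‖y‖ + (|r| + 1) * ‖η‖ := by
    intro t ht
    refine (norm_add_le _ _).trans ?_
    rw [norm_smul]
    gcongr
    have h₁ : |t - r| < 1 := by simpa [Real.dist_eq] using ht
    have h₂ : |t| ≤ |t - r| + |r| := by simpa using abs_add_le (t - r) r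
    rw [Real.norm_eq_abs]
    linarith
  refine (hasDerivAt_integral_of_dominated_loc_of_deriv_le (Metric.ball_mem_nhds r one_pos)
    (F := fun r z => θ (basket c B (insv v z (y + r • η))) * w (insv v z (y + r • η)) * gauss v z)
    (F' := fun r z => deriv θ (basket c B (insv v z (y + r • η))) *
        (fderiv ℝ (basket c B) (insv v z (y + r • η)) (insv v 0 η) * w (insv v z (y + r • η)))
          * gauss v z +
      θ (basket c B (insv v z (y + r • η))) * fderiv ℝ w (insv v z (y + r • η)) (insv v 0 η)
        * gauss v z)
    (bound := fun z => M * b₁ z + M * b₂ z)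
    (Eventually.of_forall fun t => aesm_integrand hθm (hw.continuous h) _)
    (integrable_integrand (hw.continuous h) (hw.expBound h) hθm hM _)
    ((aesm_integrand hθ'm (hW₁.continuous h) _).add (aesm_integrand hθm (hW₂.continuous h) _))
    (Eventually.of_forall fun z t ht => ?_) ((hb₁.const_mul M).add (hb₂.const_mul M))
    (Eventually.of_forall fun z t _ => ?_)).2
  · refine (norm_add_le _ _).trans (add_le_add ?_ ?_)
    · exact (norm_integrand_le (w := fun x => fderiv ℝ (basket c B) x (insv v 0 η) * w x)
        hM' z _).trans (mul_le_mul_of_nonneg_left (hle₁ z _ (hball t ht)) hM0)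
    · exact (norm_integrand_le (w := fun x => fderiv ℝ w x (insv v 0 η))
        hM z _).trans (mul_le_mul_of_nonneg_left (hle₂ z _ (hball t ht)) hM0)
  · simp only [insv_add_smul_right]
    have d₁ := hasDerivAt_line (p := insv v z y) (e := insv v 0 η) (r := t)
      (weight_basket.differentiableAt h (insv v z y + t • insv v 0 η))
    have d₂ := hasDerivAt_line (p := insv v z y) (e := insv v 0 η) (r := t)
      (hw.differentiableAt h (insv v z y + t • insv v 0 η))
    have d₃ := ((hθ.differentiable one_ne_zero)
      (basket c B (insv v z y + t • insv v 0 η))).hasDerivAt.comp t d₁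
    refine ((d₃.fun_mul d₂).mul_const (gauss v z)).congr_deriv ?_
    simp only [Function.comp]
    ring

/-- The fundamental theorem of calculus along the segment from `y` to `y + η`, together with the
continuity along it that later supplies measurability. -/
lemma expect_sub_of_smooth (h : Admissible c B j) (hw : Weight c B j w) (hj : j ∈ v)
    {θ : ℝ → ℝ} (hθ : ContDiff ℝ 1 θ) {M : ℝ} (hM : ∀ t, |θ t| ≤ M) (hM' : ∀ t, |deriv θ t| ≤ M)
    (y η : {i : Fin d // i ∉ v} → ℝ) :
    Continuous (fun r : ℝ => expect c B v θ w (y + r • η)) ∧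
    ∫ r in (0 : ℝ)..1, expect c B v θ (ibpWeight c B j w (insv v 0 η)) (y + r • η) =
      expect c B v θ w (y + η) - expect c B v θ w y := by
  have hcont : ∀ {u}, Weight c B j u → Continuous fun r : ℝ => expect c B v θ u (y + r • η) :=
    fun hu => continuous_iff_continuousAt.2 fun r =>
      (hasDerivAt_expect h hu hj hθ hM hM' y η r).continuousAt
  refine ⟨hcont hw, ?_⟩
  rw [intervalIntegral.integral_eq_sub_of_hasDerivAt
    (fun r _ => hasDerivAt_expect h hw hj hθ hM hM' y η r)
    ((hcont (hw.ibp h _)).intervalIntegrable _ _)]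
  simp

/-! ### Nonsingularity of the generating matrix -/

/-- Every column of a generating matrix of Brownian motion is nonzero: the successive differences
of its rows form `√δ` times an orthogonal matrix. -/
lemma exists_entry_ne_zero {A : Matrix (Fin d) (Fin d) ℝ} {δ : ℝ} (hδ : 0 < δ)
    (hA : ∀ i k : Fin d, (A * A.transpose) i k = δ * (↑(min (i : ℕ) (k : ℕ)) + 1)) (j : Fin d) :
    ∃ i, A i j ≠ 0 := by
  by_contra! hcon
  -- `a n` is the row of `A` for time `n * δ`, with `a 0 = 0`
  let a : ℕ → Fin d → ℝ := fun n k => if h : 0 < n ∧ n ≤ d then A ⟨n - 1, by lia⟩ k else 0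
  have ha : ∀ m n, m ≤ d → n ≤ d → ∑ k, a m k * a n k = δ * (min m n : ℕ) := by
    intro m n hm hn
    rcases Nat.eq_zero_or_pos m with rfl | hm0
    · simp [a]
    rcases Nat.eq_zero_or_pos n with rfl | hn0
    · simp [a]
    have := hA ⟨m - 1, by lia⟩ ⟨n - 1, by lia⟩
    rw [Matrix.mul_apply] at this
    simp only [a, hm0, hm, hn0, hn, and_self, dif_pos, Matrix.transpose_apply] at this ⊢
    rw [this, show min m n = min (m - 1) (n - 1) + 1 by lia]
    push_cast
    ring
  let G : Matrix (Fin d) (Fin d) ℝ := fun i k => a (i + 1) k - a i k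
  have hG : G * G.transpose = δ • (1 : Matrix (Fin d) (Fin d) ℝ) := by
    ext i k
    have hexp : (G * G.transpose) i k = δ * (min (i + 1 : ℕ) (k + 1) : ℕ) -
        δ * (min (i + 1 : ℕ) k : ℕ) - δ * (min (i : ℕ) (k + 1) : ℕ) + δ * (min (i : ℕ) k : ℕ) := by
      rw [← ha _ _ i.2 k.2, ← ha _ _ i.2 k.2.le, ← ha _ _ i.2.le k.2, ← ha _ _ i.2.le k.2.le,
        Matrix.mul_apply, ← Finset.sum_sub_distrib, ← Finset.sum_sub_distrib,
        ← Finset.sum_add_distrib]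
      refine Finset.sum_congr rfl fun l _ => ?_
      change (a (i + 1) l - a i l) * (a (k + 1) l - a k l) = _
      simp only [Nat.succ_eq_add_one]
      ring
    rw [hexp, Matrix.smul_apply, Matrix.one_apply, smul_eq_mul]
    rcases lt_trichotomy i k with hik | rfl | hik
    · have h' : (i : ℕ) < k := hik
      rw [if_neg hik.ne, min_eq_left (by lia), min_eq_left (by lia), min_eq_left (by lia),
        min_eq_left (by lia)]
      ring
    · simp
      ring
    · have h' : (k : ℕ) < i := hik
      rw [if_neg hik.ne', min_eq_right (by lia), min_eq_right (by lia), min_eq_right (by lia),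
        min_eq_right (by lia)]
      ring
  have hG' : (δ⁻¹ • G.transpose) * G = 1 := by
    rw [mul_eq_one_comm, Matrix.mul_smul, hG, smul_smul, inv_mul_cancel₀ hδ.ne', one_smul]
  have hcol : ∀ i, G i j = 0 := by
    intro i
    simp [G, a, hcon]
  have := congrFun (congrFun hG' j) j
  rw [Matrix.mul_apply] at this
  simp [hcol] at this

/-! ### Passage to the indicator -/

/-- The indicator of `[K, ∞)`. -/
noncomputable def ind (K t : ℝ) : ℝ := if K ≤ t then 1 else 0

lemma measurable_ind (K : ℝ) : Measurable (ind K) :=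
  Measurable.ite measurableSet_Ici measurable_const measurable_const

lemma abs_ind_le (K t : ℝ) : |ind K t| ≤ 1 := by
  unfold ind; split_ifs <;> simp

/-- Smooth cutoffs with values in `[0, 1]`. The shift by `1` makes them equal to `1` on all of
`[K, ∞)`, so that they converge pointwise to `ind K`, including at `K`. -/
noncomputable def ramp (K : ℝ) (n : ℕ) (t : ℝ) : ℝ := Real.smoothTransition (n * (t - K) + 1)

lemma contDiff_ramp (K : ℝ) (n : ℕ) : ContDiff ℝ 1 (ramp K n) := by
  unfold ramp
  exact (Real.smoothTransition.contDiff (n := 1)).comp (by fun_prop)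

lemma abs_ramp_le (K : ℝ) (n : ℕ) (t : ℝ) : |ramp K n t| ≤ 1 := by
  unfold ramp
  rw [abs_of_nonneg (Real.smoothTransition.nonneg _)]
  exact Real.smoothTransition.le_one _

lemma tendsto_ramp (K t : ℝ) : Tendsto (fun n => ramp K n t) atTop (𝓝 (ind K t)) := by
  unfold ind ramp
  split_ifs with h
  · refine tendsto_const_nhds.congr fun n => (Real.smoothTransition.one_of_one_le ?_).symm
    have : 0 ≤ (n : ℝ) * (t - K) := mul_nonneg n.cast_nonneg (sub_nonneg.2 h)
    linarith
  · refine tendsto_const_nhds.congr' ?_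
    have h' : 0 < K - t := by linarith
    obtain ⟨N, hN⟩ := exists_nat_ge (K - t)⁻¹
    filter_upwards [eventually_ge_atTop N] with n hn
    refine (Real.smoothTransition.zero_of_nonpos ?_).symm
    have h₁ : (K - t)⁻¹ ≤ n := hN.trans (by exact_mod_cast hn)
    have h₂ := mul_le_mul_of_nonneg_right h₁ h'.le
    rw [inv_mul_cancel₀ h'.ne'] at h₂
    linarith

lemma exists_bound_deriv_ramp (K : ℝ) (n : ℕ) : ∃ M, ∀ t, |deriv (ramp K n) t| ≤ M := by
  have hs : ContDiff ℝ 1 Real.smoothTransition := Real.smoothTransition.contDiff (n := 1)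
  have hsupp : HasCompactSupport (deriv Real.smoothTransition) := by
    refine HasCompactSupport.intro (isCompact_Icc (a := (0 : ℝ)) (b := 1)) fun x hx => ?_
    rw [mem_Icc, not_and_or, not_le, not_le] at hx
    rcases hx with hx | hx
    · have : Real.smoothTransition =ᶠ[𝓝 x] fun _ => 0 := by
        filter_upwards [Iio_mem_nhds hx] with t ht
        exact Real.smoothTransition.zero_of_nonpos (le_of_lt ht)
      rw [this.deriv_eq, deriv_const]
    · have : Real.smoothTransition =ᶠ[𝓝 x] fun _ => 1 := by
        filter_upwards [Ioi_mem_nhds hx] with t ht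
        exact Real.smoothTransition.one_of_one_le (le_of_lt ht)
      rw [this.deriv_eq, deriv_const]
  obtain ⟨M, hM⟩ := (hs.continuous_deriv le_rfl).bounded_above_of_compact_support hsupp
  refine ⟨M * n, fun t => ?_⟩
  have h₁ : HasDerivAt (fun t : ℝ => (n : ℝ) * (t - K) + 1) n t := by
    simpa using (((hasDerivAt_id t).sub_const K).const_mul (n : ℝ)).add_const 1
  have h₂ := ((hs.differentiable one_ne_zero) ((n : ℝ) * (t - K) + 1)).hasDerivAt.comp t h₁
  have h₃ : deriv (ramp K n) t = _ := h₂.deriv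
  rw [h₃, abs_mul, Nat.abs_cast]
  exact mul_le_mul_of_nonneg_right (hM _) n.cast_nonneg

lemma tendsto_expect_ramp (hc : Continuous w) (hw : ExpBound w) (K : ℝ)
    (y : {i : Fin d // i ∉ v} → ℝ) :
    Tendsto (fun n => expect c B v (ramp K n) w y) atTop (𝓝 (expect c B v (ind K) w y)) := by
  obtain ⟨b, hb, hle⟩ := hw.exists_dominating (v := v) ‖y‖
  refine tendsto_integral_of_dominated_convergence b
    (fun n => aesm_integrand (contDiff_ramp K n).continuous.measurable hc y) hb
    (fun n => Eventually.of_forall fun z => ?_) (Eventually.of_forall fun z => ?_)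
  · exact (norm_integrand_le (abs_ramp_le K n) z y).trans ((one_mul _).trans_le (hle z y le_rfl))
  · exact ((tendsto_ramp K _).mul_const _).mul_const _

lemma norm_add_smul_le {V : Type*} [NormedAddCommGroup V] [NormedSpace ℝ V] (y η : V) {r : ℝ}
    (hr : r ∈ uIoc (0 : ℝ) 1) : ‖y + r • η‖ ≤ ‖y‖ + ‖η‖ := by
  rw [uIoc_of_le zero_le_one] at hr
  refine (norm_add_le _ _).trans ?_
  rw [norm_smul, Real.norm_of_nonneg hr.1.le]
  gcongr
  exact mul_le_of_le_one_left (norm_nonneg _) hr.2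

/-- The identity of `expect_sub_of_smooth` for the indicator cutoff, by dominated convergence. -/
lemma expect_ind_sub (h : Admissible c B j) (hw : Weight c B j w) (hj : j ∈ v) (K : ℝ)
    (y η : {i : Fin d // i ∉ v} → ℝ) :
    expect c B v (ind K) w (y + η) - expect c B v (ind K) w y =
      ∫ r in (0 : ℝ)..1, expect c B v (ind K) (ibpWeight c B j w (insv v 0 η)) (y + r • η) := by
  have hW := hw.ibp h (insv v 0 η)
  have hfin : ∀ n, ∀ {u}, Weight c B j u →
      Continuous (fun r : ℝ => expect c B v (ramp K n) u (y + r • η)) ∧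
      ∫ r in (0 : ℝ)..1, expect c B v (ramp K n) (ibpWeight c B j u (insv v 0 η)) (y + r • η) =
        expect c B v (ramp K n) u (y + η) - expect c B v (ramp K n) u y := by
    intro n u hu
    obtain ⟨M, hM⟩ := exists_bound_deriv_ramp K n
    exact expect_sub_of_smooth h hu hj (contDiff_ramp K n) (M := max 1 M)
      (fun t => (abs_ramp_le K n t).trans (le_max_left _ _))
      (fun t => (hM t).trans (le_max_right _ _)) y η
  have hlim : ∀ {u}, Weight c B j u → ∀ y : {i : Fin d // i ∉ v} → ℝ,
      Tendsto (fun n => expect c B v (ramp K n) u y) atTop (𝓝 (expect c B v (ind K) u y)) :=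
    fun hu y => tendsto_expect_ramp (hu.continuous h) (hu.expBound h) K y
  obtain ⟨M, hM⟩ := exists_expect_bound (c := c) (B := B) (v := v) (hW.expBound h) (‖y‖ + ‖η‖)
  refine tendsto_nhds_unique ((hlim hw (y + η)).sub (hlim hw y)) ?_
  simp only [← (hfin _ hw).2]
  refine intervalIntegral.tendsto_integral_filter_of_dominated_convergence (fun _ => M)
    (Eventually.of_forall fun n => (hfin n hW).1.aestronglyMeasurable)
    (Eventually.of_forall fun n => Eventually.of_forall fun r hr => ?_)
    intervalIntegrable_const (Eventually.of_forall fun r _ => hlim hW _)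
  exact hM _ (abs_ramp_le K n) _ (norm_add_smul_le y η hr)

lemma expect_ibpWeight_eq_sum (h : Admissible c B j) (hw : Weight c B j w) (K : ℝ)
    (e : Fin d → ℝ) (y : {i : Fin d // i ∉ v} → ℝ) :
    expect c B v (ind K) (ibpWeight c B j w e) y =
      ∑ k, e k * expect c B v (ind K) (ibpWeight c B j w (Pi.single k 1)) y := by
  unfold expect
  simp only [← integral_const_mul]
  rw [← integral_finsetSum]
  · congr 1
    funext z
    rw [ibpWeight_eq_sum h hw e, Finset.mul_sum, Finset.sum_mul]
    exact Finset.sum_congr rfl fun k _ => by ring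
  · intro k _
    have hW := hw.ibp h (Pi.single k 1)
    exact (integrable_integrand (hW.continuous h) (hW.expBound h) (measurable_ind K)
      (abs_ind_le K) y).const_mul _

lemma abs_insv_zero_le (η : {i : Fin d // i ∉ v} → ℝ) (k : Fin d) : |insv v 0 η k| ≤ ‖η‖ := by
  simpa using (norm_le_pi_norm (insv v 0 η) k).trans (norm_insv_le 0 η)

/-! ### Smoothness -/

/-- By `expect_ind_sub` and the local boundedness of expectations, `expect` is locally Lipschitz. -/
lemma continuous_expect_ind (h : Admissible c B j) (hw : Weight c B j w) (hj : j ∈ v) (K : ℝ) :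
    Continuous (expect c B v (ind K) w) := by
  refine continuous_iff_continuousAt.2 fun y => ?_
  choose M hM using fun k => exists_expect_bound (c := c) (B := B) (v := v)
    ((hw.ibp h (Pi.single k 1)).expBound h) (‖y‖ + 1)
  have hM0 : ∀ k, 0 ≤ M k := fun k =>
    (abs_nonneg _).trans (hM k (ind K) (abs_ind_le K) y (by linarith))
  have hLip : ∀ᶠ x in 𝓝 y, ‖expect c B v (ind K) w x - expect c B v (ind K) w y‖ ≤
      (∑ k, M k) * ‖x - y‖ := by
    filter_upwards [Metric.ball_mem_nhds y one_pos] with x hx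
    have hη : ‖x - y‖ ≤ 1 := by simpa [dist_eq_norm] using (Metric.mem_ball.1 hx).le
    have := expect_ind_sub h hw hj K y (x - y)
    rw [add_sub_cancel] at this
    rw [this]
    refine (intervalIntegral.norm_integral_le_of_norm_le_const
      (C := (∑ k, M k) * ‖x - y‖) fun r hr => ?_).trans (by simp)
    rw [expect_ibpWeight_eq_sum h hw, Finset.sum_mul, Real.norm_eq_abs]
    refine (Finset.abs_sum_le_sum_abs _ _).trans (Finset.sum_le_sum fun k _ => ?_)
    rw [abs_mul, mul_comm]
    exact mul_le_mul (hM k _ (abs_ind_le K) _ ((norm_add_smul_le y _ hr).trans (by linarith)))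
      (abs_insv_zero_le _ k) (abs_nonneg _) (hM0 k)
  refine tendsto_iff_norm_sub_tendsto_zero.2 (squeeze_zero' (Eventually.of_forall fun _ =>
    norm_nonneg _) hLip ?_)
  have : Continuous fun x => (∑ k, M k) * ‖x - y‖ := by fun_prop
  simpa using this.tendsto y

/-- A function that is the integral of a continuous field `f'` of linear forms along every segment
has Fréchet derivative `f'`. -/
lemma hasFDerivAt_of_integral {V : Type*} [NormedAddCommGroup V] [NormedSpace ℝ V] {f : V → ℝ}
    {f' : V → V →L[ℝ] ℝ} (hc : Continuous f')
    (hf : ∀ y η, f (y + η) - f y = ∫ r in (0 : ℝ)..1, f' (y + r • η) η) (y : V) :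
    HasFDerivAt f (f' y) y := by
  rw [hasFDerivAt_iff_isLittleO_nhds_zero, Asymptotics.isLittleO_iff]
  intro ε hε
  obtain ⟨δ, hδ, hcont⟩ := Metric.continuousAt_iff.1 (hc.continuousAt (x := y)) ε hε
  filter_upwards [Metric.ball_mem_nhds (0 : V) hδ] with η hη
  have hint : f (y + η) - f y - f' y η = ∫ r in (0 : ℝ)..1, (f' (y + r • η) - f' y) η := by
    have hc' : Continuous fun r : ℝ => f' (y + r • η) η := by fun_prop
    simp only [_root_.sub_apply]
    rw [intervalIntegral.integral_sub (hc'.intervalIntegrable _ _) intervalIntegrable_const, hf]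
    simp
  rw [hint]
  refine (intervalIntegral.norm_integral_le_of_norm_le_const
    (C := ε * ‖η‖) fun r hr => ?_).trans (by simp)
  refine ((f' (y + r • η) - f' y).le_opNorm η).trans ?_
  gcongr
  rw [← dist_eq_norm]
  refine (hcont ?_).le
  rw [uIoc_of_le zero_le_one] at hr
  rw [dist_eq_norm, add_sub_cancel_left, norm_smul, Real.norm_of_nonneg hr.1.le]
  exact (mul_le_of_le_one_left (norm_nonneg _) hr.2).trans_lt (by simpa using hη)

/-- The `k`-th coordinate of the embedding `η ↦ insv v 0 η` of the free variables. -/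
def embCoord (v : Finset (Fin d)) (k : Fin d) : ({i : Fin d // i ∉ v} → ℝ) →L[ℝ] ℝ :=
  if hk : k ∈ v then 0 else ContinuousLinearMap.proj ⟨k, hk⟩

lemma embCoord_apply (k : Fin d) (η : {i : Fin d // i ∉ v} → ℝ) :
    embCoord v k η = insv v 0 η k := by
  by_cases hk : k ∈ v <;> simp [embCoord, insv, hk]

lemma hasFDerivAt_expect_ind (h : Admissible c B j) (hw : Weight c B j w) (hj : j ∈ v) (K : ℝ)
    (y : {i : Fin d // i ∉ v} → ℝ) :
    HasFDerivAt (expect c B v (ind K) w)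
      (∑ k, expect c B v (ind K) (ibpWeight c B j w (Pi.single k 1)) y • embCoord v k) y := by
  refine hasFDerivAt_of_integral (f' := fun y =>
    ∑ k, expect c B v (ind K) (ibpWeight c B j w (Pi.single k 1)) y • embCoord v k) ?_
    (fun y η => ?_) y
  · exact continuous_finsetSum _ fun k _ =>
      (continuous_expect_ind h (hw.ibp h _) hj K).smul continuous_const
  · rw [expect_ind_sub h hw hj]
    congr 1
    funext r
    rw [expect_ibpWeight_eq_sum h hw, _root_.sum_apply]
    refine Finset.sum_congr rfl fun k _ => ?_
    simp [embCoord_apply, mul_comm]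

theorem contDiff_expect_ind (h : Admissible c B j) (hj : j ∈ v) (K : ℝ) (n : ℕ) :
    ∀ {w}, Weight c B j w → ContDiff ℝ n (expect c B v (ind K) w) := by
  induction n with
  | zero => exact fun hw => contDiff_zero.2 (continuous_expect_ind h hw hj K)
  | succ n ih =>
    intro w hw
    push_cast
    exact contDiff_succ_iff_hasFDerivAt.2 ⟨_, ContDiff.sum fun k _ =>
      (ih (hw.ibp h (Pi.single k 1))).smul contDiff_const, hasFDerivAt_expect_ind h hw hj K⟩

end BinaryAsian

open BinaryAsian in
/-- for the binary Asian option payoff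
`f(x) = e^{−μT}·1{S_A(x) ≥ K}`, if the `j`-th column of the generating matrix
has constant sign, then `P_v f ∈ C^∞(ℝ^{d−|v|})` for every `v ∋ j`. -/
theorem stmt_18 (d : ℕ) (hd : 1 ≤ d) (S0 σ T K μ : ℝ)
    (hS0 : 0 < S0) (hσ : 0 < σ) (hT : 0 < T) (hK : 0 < K)
    (A : Matrix (Fin d) (Fin d) ℝ)
    (hA : ∀ i k : Fin d, (A * A.transpose) i k = T / d * (↑(min (i : ℕ) (k : ℕ)) + 1))
    (j : Fin d) (hcol : (∀ i, 0 ≤ A i j) ∨ (∀ i, A i j ≤ 0)) :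
    ∀ v : Finset (Fin d), j ∈ v →
      ContDiff ℝ (⊤ : ℕ∞) (Pv v stdNormalPdf (fun x =>
        Real.exp (-μ * T) *
          (if K ≤ (1 / d) * ∑ i, Sprice d S0 σ μ (T / d) A i x then 1 else 0))) := by
  intro v hj
  have hd0 : (0 : ℝ) < d := by exact_mod_cast hd
  set c : Fin d → ℝ := fun i =>
    1 / d * (S0 * Real.exp ((μ - σ ^ 2 / 2) * ((i : ℕ) + 1) * (T / d))) with hc
  set B : Fin d → Fin d → ℝ := fun i k => σ * A i k with hB
  have hbasket : ∀ x, (1 / d) * ∑ i, Sprice d S0 σ μ (T / d) A i x = basket c B x := by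
    intro x
    simp only [Sprice, basket, hc, hB, Finset.mul_sum, Real.exp_add, mul_assoc]
  have hne : ∃ i, A i j ≠ 0 := exists_entry_ne_zero (div_pos hT hd0) hA j
  have hadm : Admissible c B j := by
    refine ⟨fun i => by positivity, ?_, ?_⟩
    · exact hcol.imp (fun h i => mul_nonneg hσ.le (h i))
        (fun h i => mul_nonpos_of_nonneg_of_nonpos hσ.le (h i))
    · exact hne.imp fun i hi => mul_ne_zero hσ.ne' hi
  have hPv : Pv v stdNormalPdf (fun x => Real.exp (-μ * T) *
      (if K ≤ (1 / d) * ∑ i, Sprice d S0 σ μ (T / d) A i x then 1 else 0)) =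
      expect c B v (ind K) (fun _ => Real.exp (-μ * T)) := by
    funext y
    simp only [Pv, expect, hbasket, gauss, ind]
    congr 1
    funext z
    ring
  rw [hPv]
  exact contDiff_infty.2 fun n => contDiff_expect_ind hadm hj K n (Weight.const _)
end

section
/- In the Black–Scholes Asian setting with φ(x) = S_A(x) − K, fix j ∈ {1,…,d} and suppose there exist indices i_1, i_2 ∈ {1,…,d} with a_{i_1 j} < 0 < a_{i_2 j}. Then (D_jD_jφ)(x) = (σ²/d)·Σ_{i=1}^d a_{ij}² S_i(x) > 0 for all x, and there exists a unique function Ψ ∈ C^∞(ℝ^{d-1}) such that (D_jφ)(Ψ(y), y) = 0 for all y ∈ ℝ^{d-1} (y = x_{-j}); moreover, for each fixed y, the map x_j ↦ φ(x_j, y) is strictly decreasing on (−∞, Ψ(y)) and strictly increasing on (Ψ(y), ∞), so that min_{x_j ∈ ℝ} φ(x_j, y) = φ(Ψ(y), y). -/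
/-!
Differentiating the exponential prices in `x_j` multiplies the `i`-th price by `σ a_{ij}`, so
`D_jφ = (1/d) ∑ σ a_{ij} S_i` and `D_jD_jφ = (1/d) ∑ (σ a_{ij})² S_i`. The latter is positive
because the `j`-th column of `A` is nonzero (`pD_sum_Sprice`).

For fixed `y`, `t ↦ D_jφ(t, y)` has the form `∑ aᵢ bᵢ exp (aᵢ t)` with `bᵢ > 0`. It is therefore
strictly increasing, and since some `aᵢ` is positive and some is negative it takes both signs
(`exists_sum_exp_nonneg`, applied also after the reflection `t ↦ -t`). Its unique zero is `Ψ(y)`,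
which makes `φ(·, y)` strictly decreasing before and strictly increasing after `Ψ(y)`. Since
`D_jD_jφ` never vanishes, the implicit function theorem gives local smooth solutions, and these
agree with `Ψ` by uniqueness of the zero (`contDiff_of_unique_zero`).
-/

open MeasureTheory Set Filter

/-- Partial derivative of `g` with respect to the `i`-th coordinate. -/
noncomputable def pD {ι : Type} [Fintype ι] [DecidableEq ι] (i : ι)
    (g : (ι → ℝ) → ℝ) : (ι → ℝ) → ℝ :=
  fun x => fderiv ℝ g x (Pi.single i 1)

/-- Insert the value `t` at coordinate `j`, the remaining coordinates given by `y`. -/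
def insj {d : ℕ} (j : Fin d) (t : ℝ) (y : {i : Fin d // i ≠ j} → ℝ) : Fin d → ℝ :=
  fun i => if h : i = j then t else y ⟨i, h⟩

lemma Sprice_pos {d : ℕ} {S0 σ μ Δt : ℝ} (hS0 : 0 < S0) (A : Matrix (Fin d) (Fin d) ℝ)
    (i : Fin d) (x : Fin d → ℝ) : 0 < Sprice d S0 σ μ Δt A i x :=
  mul_pos hS0 (Real.exp_pos _)

lemma contDiff_Sprice {d : ℕ} {S0 σ μ Δt : ℝ} (A : Matrix (Fin d) (Fin d) ℝ) (i : Fin d) :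
    ContDiff ℝ (⊤ : ℕ∞) (Sprice d S0 σ μ Δt A i) := by
  unfold Sprice
  fun_prop

lemma Sprice_add_smul {d : ℕ} {S0 σ μ Δt : ℝ} (A : Matrix (Fin d) (Fin d) ℝ)
    (i j : Fin d) (x : Fin d → ℝ) (t : ℝ) :
    Sprice d S0 σ μ Δt A i (x + t • Pi.single j 1) =
      Sprice d S0 σ μ Δt A i x * Real.exp (σ * A i j * t) := by
  have h : ∑ k, A i k * (x + t • (Pi.single j 1 : Fin d → ℝ)) k
      = ∑ k, A i k * x k + A i j * t := by
    simp [mul_add, Finset.sum_add_distrib, Pi.single_apply]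
  unfold Sprice
  rw [h, mul_assoc S0, ← Real.exp_add]
  ring_nf

/-- The partial derivative in `x_j` acts on linear combinations of the prices by multiplying the
`i`-th coefficient by `σ a_{ij}`. -/
lemma pD_sum_Sprice {d : ℕ} {S0 σ μ Δt : ℝ} (A : Matrix (Fin d) (Fin d) ℝ) (j : Fin d)
    (c : Fin d → ℝ) (K : ℝ) (x : Fin d → ℝ) :
    pD j (fun x => ∑ i, c i * Sprice d S0 σ μ Δt A i x - K) x =
      ∑ i, c i * (σ * A i j) * Sprice d S0 σ μ Δt A i x := by
  have hd : DifferentiableAt ℝ (fun x => ∑ i, c i * Sprice d S0 σ μ Δt A i x - K) x := by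
    have := fun i => (contDiff_Sprice (S0 := S0) (σ := σ) (μ := μ) (Δt := Δt) A i).differentiable
      (by simp)
    fun_prop
  have hl : HasLineDerivAt ℝ (fun x => ∑ i, c i * Sprice d S0 σ μ Δt A i x - K)
      (∑ i, c i * (σ * A i j) * Sprice d S0 σ μ Δt A i x) x (Pi.single j 1) := by
    unfold HasLineDerivAt
    simp only [Sprice_add_smul]
    refine HasDerivAt.sub_const _ (HasDerivAt.fun_sum fun i _ => ?_)
    have h1 : HasDerivAt (fun t : ℝ => σ * A i j * t) (σ * A i j) 0 := by
      simpa using (hasDerivAt_id (0 : ℝ)).const_mul (σ * A i j)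
    have h2 := (h1.exp.const_mul (Sprice d S0 σ μ Δt A i x)).const_mul (c i)
    refine h2.congr_deriv ?_
    rw [mul_zero, Real.exp_zero]
    ring
  unfold pD
  rw [← hd.lineDeriv_eq_fderiv, hl.lineDeriv]

lemma insj_eq_add_smul {d : ℕ} (j : Fin d) (t : ℝ) (y : {i : Fin d // i ≠ j} → ℝ) :
    insj j t y = insj j 0 y + t • Pi.single j 1 := by
  ext i
  by_cases h : i = j
  · subst h
    simp [insj]
  · simp [insj, h]

lemma contDiff_insj {d : ℕ} (j : Fin d) :
    ContDiff ℝ (⊤ : ℕ∞) (fun p : ({i : Fin d // i ≠ j} → ℝ) × ℝ => insj j p.2 p.1) := by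
  rw [contDiff_pi]
  intro i
  by_cases h : i = j
  · simp only [insj, h, dite_true]
    fun_prop
  · simp only [insj, h, dite_false]
    fun_prop

lemma hasDerivAt_comp_insj {d : ℕ} (j : Fin d) {F : (Fin d → ℝ) → ℝ} (hF : Differentiable ℝ F)
    (y : {i : Fin d // i ≠ j} → ℝ) (t : ℝ) :
    HasDerivAt (fun t => F (insj j t y)) (pD j F (insj j t y)) t := by
  have h : HasDerivAt (fun t => insj j t y) (Pi.single j (1 : ℝ)) t := by
    rw [hasDerivAt_pi]
    intro i
    by_cases h : i = j
    · subst h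
      simpa [insj] using hasDerivAt_id' t
    · simpa [insj, h] using hasDerivAt_const t (y ⟨i, h⟩)
  exact (hF _).hasFDerivAt.comp_hasDerivAt t h

/-- For `t ≥ 0` every summand is at least its value at `0`, while the summand of a positive
exponent grows at least linearly. -/
lemma exists_sum_exp_nonneg {ι : Type*} [Fintype ι] (a b : ι → ℝ) (hb : ∀ i, 0 < b i) (i₀ : ι)
    (h₀ : 0 < a i₀) : ∃ t, 0 ≤ ∑ i, a i * b i * Real.exp (a i * t) := by
  classical
  set C := ∑ i, a i * b i with hC
  have hpos : 0 < a i₀ * b i₀ * a i₀ := mul_pos (mul_pos h₀ (hb i₀)) h₀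
  -- The linear lower bound `C + a² b t`, with `a` and `b` taken at `i₀`, is nonnegative here.
  refine ⟨|C| / (a i₀ * b i₀ * a i₀), ?_⟩
  set t := |C| / (a i₀ * b i₀ * a i₀) with ht
  have ht0 : 0 ≤ t := by positivity
  have key : ∀ i, a i * b i + (if i = i₀ then |C| else 0) ≤ a i * b i * Real.exp (a i * t) := by
    intro i
    split_ifs with h
    · subst h
      have h1 := Real.add_one_le_exp (a i * t)
      have h2 : a i * b i * (a i * t) = |C| := by
        have := (hb i).ne'
        rw [ht]
        field_simp
      nlinarith [mul_pos h₀ (hb i)]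
    · rcases le_total 0 (a i) with h1 | h1
      · have := Real.one_le_exp (mul_nonneg h1 ht0)
        nlinarith [mul_nonneg h1 (hb i).le]
      · have := Real.exp_le_one_iff.2 (mul_nonpos_of_nonpos_of_nonneg h1 ht0)
        nlinarith [mul_nonneg (neg_nonneg.2 h1) (hb i).le]
  have h := Finset.sum_le_sum fun i (_ : i ∈ Finset.univ) => key i
  simp only [Finset.sum_add_distrib, Finset.sum_ite_eq', Finset.mem_univ, if_true] at h
  linarith [neg_abs_le C]

/-- The implicit function theorem for a globally defined solution: uniqueness of the zero in each
fibre identifies the given solution with the local smooth ones. -/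
lemma contDiff_of_unique_zero {E : Type*} [NormedAddCommGroup E] [NormedSpace ℝ E]
    [CompleteSpace E] {f : E × ℝ → ℝ} (hf : ContDiff ℝ (⊤ : ℕ∞) f) {Ψ : E → ℝ}
    (hz : ∀ y, f (y, Ψ y) = 0) (huniq : ∀ y t, f (y, t) = 0 → t = Ψ y)
    (hne : ∀ y t, deriv (fun s => f (y, s)) t ≠ 0) : ContDiff ℝ (⊤ : ℕ∞) Ψ := by
  rw [contDiff_iff_contDiffAt]
  intro y
  have hn : ((⊤ : ℕ∞) : WithTop ℕ∞) ≠ 0 := by simp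
  have hfu : ContDiffAt ℝ (⊤ : ℕ∞) f (y, Ψ y) := hf.contDiffAt
  have hd : fderiv ℝ f (y, Ψ y) (0, 1) ≠ 0 := by
    have h : HasDerivAt (fun s => f (y, s)) (fderiv ℝ f (y, Ψ y) (0, 1)) (Ψ y) :=
      (hf.differentiable hn _).hasFDerivAt.comp_hasDerivAt (Ψ y)
        ((hasDerivAt_const (Ψ y) y).prodMk (hasDerivAt_id (Ψ y)))
    rw [← h.deriv]
    exact hne y _
  have hinv : (fderiv ℝ f (y, Ψ y) ∘L .inr ℝ E ℝ).IsInvertible := by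
    refine ⟨ContinuousLinearEquiv.unitsEquivAut ℝ (Units.mk0 _ hd), ?_⟩
    ext
    simp
  refine (hfu.contDiffAt_implicitFunction hn hinv).congr_of_eventuallyEq ?_
  filter_upwards [hfu.eventually_apply_implicitFunction hn hinv] with z hz'
  exact (huniq z _ (hz'.trans (hz y))).symm

/-- in the Black–Scholes Asian setting with a sign change in the `j`-th
column of the generating matrix, `φ(x) = S_A(x) − K` is strictly convex in `x_j` with
`(D_jD_jφ)(x) = (σ²/d)·Σ_i a_{ij}² S_i(x) > 0`; there is a unique `Ψ ∈ C^∞(ℝ^{d-1})`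
with `(D_jφ)(Ψ(y), y) = 0`, and `x_j ↦ φ(x_j, y)` is strictly decreasing on
`(−∞, Ψ(y)]`, strictly increasing on `[Ψ(y), ∞)`, and minimized at `Ψ(y)`. -/
theorem stmt_19 (d : ℕ) (hd : 1 ≤ d) (S0 σ T K μ : ℝ)
    (hS0 : 0 < S0) (hσ : 0 < σ) (hT : 0 < T) (hK : 0 < K)
    (A : Matrix (Fin d) (Fin d) ℝ)
    (hA : ∀ i k : Fin d, (A * A.transpose) i k = T / d * (↑(min (i : ℕ) (k : ℕ)) + 1))
    (j : Fin d) (i₁ i₂ : Fin d) (hi₁ : A i₁ j < 0) (hi₂ : 0 < A i₂ j)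
    (φ : (Fin d → ℝ) → ℝ)
    (hφ : ∀ x, φ x = (1 / d) * ∑ i, Sprice d S0 σ μ (T / d) A i x - K) :
    -- `(D_jD_jφ)(x) = (σ²/d)·Σ_i a_{ij}² S_i(x) > 0`
    (∀ x : Fin d → ℝ,
      pD j (pD j φ) x = σ ^ 2 / d * ∑ i, (A i j) ^ 2 * Sprice d S0 σ μ (T / d) A i x ∧
      0 < pD j (pD j φ) x) ∧
    -- unique `Ψ ∈ C^∞(ℝ^{d-1})` with `(D_jφ)(Ψ(y), y) = 0`, monotonicity and minimum
    ∃ Ψ : ({i : Fin d // i ≠ j} → ℝ) → ℝ,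
      (ContDiff ℝ (⊤ : ℕ∞) Ψ ∧ ∀ y, pD j φ (insj j (Ψ y) y) = 0) ∧
      (∀ Ψ' : ({i : Fin d // i ≠ j} → ℝ) → ℝ,
        (ContDiff ℝ (⊤ : ℕ∞) Ψ' ∧ ∀ y, pD j φ (insj j (Ψ' y) y) = 0) → Ψ' = Ψ) ∧
      ∀ y : {i : Fin d // i ≠ j} → ℝ,
        StrictAntiOn (fun t => φ (insj j t y)) (Iic (Ψ y)) ∧
        StrictMonoOn (fun t => φ (insj j t y)) (Ici (Ψ y)) ∧
        ∀ t : ℝ, φ (insj j (Ψ y) y) ≤ φ (insj j t y) := by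
  have hd0 : (0 : ℝ) < d := by exact_mod_cast hd
  set S := Sprice d S0 σ μ (T / d) A with hS
  have hSpos : ∀ i x, 0 < S i x := fun i x => Sprice_pos hS0 A i x
  have hScd : ∀ i, ContDiff ℝ (⊤ : ℕ∞) (S i) := fun i => contDiff_Sprice A i
  have hφ' : φ = fun x => ∑ i, (1 / d : ℝ) * S i x - K := by
    funext x
    rw [hφ, Finset.mul_sum]
  have hD1 : pD j φ = fun x => ∑ i, (1 / d : ℝ) * (σ * A i j) * S i x - 0 := by
    funext x
    rw [hφ', pD_sum_Sprice, sub_zero]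
  have hD2 : ∀ x, pD j (pD j φ) x = σ ^ 2 / d * ∑ i, (A i j) ^ 2 * S i x := by
    intro x
    rw [hD1, pD_sum_Sprice, Finset.mul_sum]
    refine Finset.sum_congr rfl fun i _ => ?_
    ring
  have hD2pos : ∀ x, 0 < pD j (pD j φ) x := by
    intro x
    rw [hD2]
    refine mul_pos (by positivity) (Finset.sum_pos' (fun i _ => ?_) ⟨i₂, Finset.mem_univ _, ?_⟩)
    · exact mul_nonneg (sq_nonneg _) (hSpos i x).le
    · exact mul_pos (pow_pos hi₂ 2) (hSpos i₂ x)
  have hφcd : ContDiff ℝ (⊤ : ℕ∞) φ := by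
    rw [hφ']
    fun_prop
  have hDcd : ContDiff ℝ (⊤ : ℕ∞) (pD j φ) := by
    rw [hD1]
    fun_prop
  have hderφ := fun y t => hasDerivAt_comp_insj j (hφcd.differentiable (by simp)) y t
  have hderD := fun y t => hasDerivAt_comp_insj j (hDcd.differentiable (by simp)) y t
  have hmono : ∀ y, StrictMono fun t => pD j φ (insj j t y) := fun y =>
    strictMono_of_deriv_pos fun t => by
      rw [(hderD y t).deriv]
      exact hD2pos _
  have hline : ∀ y t, pD j φ (insj j t y) =
      1 / d * ∑ i, (σ * A i j) * S i (insj j 0 y) * Real.exp (σ * A i j * t) := by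
    intro y t
    rw [hD1, insj_eq_add_smul, Finset.mul_sum]
    simp only [hS, Sprice_add_smul, sub_zero]
    refine Finset.sum_congr rfl fun i _ => ?_
    ring
  have hex : ∀ y, ∃ t, pD j φ (insj j t y) = 0 := by
    intro y
    obtain ⟨t₂, h₂⟩ := exists_sum_exp_nonneg (fun i => σ * A i j) (fun i => S i (insj j 0 y))
      (fun i => hSpos i _) i₂ (mul_pos hσ hi₂)
    -- Reflecting `t` negates the exponents, so the negative entry `a_{i₁ j}` plays the same role.
    obtain ⟨t₁, h₁⟩ := exists_sum_exp_nonneg (fun i => -(σ * A i j)) (fun i => S i (insj j 0 y))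
      (fun i => hSpos i _) i₁ (neg_pos.2 (mul_neg_of_pos_of_neg hσ hi₁))
    have h₂' : 0 ≤ pD j φ (insj j t₂ y) := by
      rw [hline]
      exact mul_nonneg (by positivity) h₂
    have h₁' : pD j φ (insj j (-t₁) y) ≤ 0 := by
      rw [hline]
      refine mul_nonpos_of_nonneg_of_nonpos (by positivity) ?_
      simp only [neg_mul, Finset.sum_neg_distrib] at h₁
      simp only [mul_neg]
      linarith
    have hc : Continuous fun t => pD j φ (insj j t y) :=
      continuous_iff_continuousAt.2 fun t => (hderD y t).continuousAt
    exact mem_range_of_exists_le_of_exists_ge hc ⟨_, h₁'⟩ ⟨_, h₂'⟩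
  choose Ψ hΨ using hex
  have huniq : ∀ y t, pD j φ (insj j t y) = 0 → t = Ψ y := fun y t ht =>
    (hmono y).injective (ht.trans (hΨ y).symm)
  have hΨcd : ContDiff ℝ (⊤ : ℕ∞) Ψ :=
    contDiff_of_unique_zero (hDcd.comp (contDiff_insj j)) hΨ huniq fun y t =>
      ((hderD y t).deriv.trans_ne (hD2pos _).ne')
  refine ⟨fun x => ⟨hD2 x, hD2pos x⟩, Ψ, ⟨hΨcd, hΨ⟩,
    fun Ψ' h => funext fun y => huniq y _ (h.2 y), fun y => ?_⟩
  have hc : Continuous fun t => φ (insj j t y) :=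
    continuous_iff_continuousAt.2 fun t => (hderφ y t).continuousAt
  have hanti : StrictAntiOn (fun t => φ (insj j t y)) (Iic (Ψ y)) := by
    refine strictAntiOn_of_deriv_neg (convex_Iic _) hc.continuousOn fun t ht => ?_
    rw [interior_Iic] at ht
    rw [(hderφ y t).deriv, ← hΨ y]
    exact hmono y ht
  have hincr : StrictMonoOn (fun t => φ (insj j t y)) (Ici (Ψ y)) := by
    refine strictMonoOn_of_deriv_pos (convex_Ici _) hc.continuousOn fun t ht => ?_
    rw [interior_Ici] at ht
    rw [(hderφ y t).deriv, ← hΨ y]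
    exact hmono y ht
  refine ⟨hanti, hincr, fun t => ?_⟩
  rcases le_total t (Ψ y) with h | h
  · exact hanti.antitoneOn h self_mem_Iic h
  · exact hincr.monotoneOn self_mem_Ici h h
end
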